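/- arXiv:1108.0945 — 4 statements merged into one kernel-verified Lean document; each statement's English description precedes it below -/
import Mathlib

section
/- Let 𝒳 be a wealth-process set. If the family of terminal values {X_T : X ∈ 𝒳} is bounded in probability, then the larger family {X_t : X ∈ 𝒳, t ∈ [0,T]} is also bounded in probability. -/
open MeasureTheory Filter Set Topology
open scoped ENNReal

noncomputable section

namespace WPS

variable {Ω : Type*}

/-- A real function is càdlàg on `[0,T]`: right-continuous on `[0,T)` and
with left limits on `(0,T]`. -/
def CadlagOn (T : ℝ) (f : ℝ → ℝ) : Prop :=
  (∀ t ∈ Set.Ico (0:ℝ) T, ContinuousWithinAt f (Set.Ici t) t) ∧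
  (∀ t ∈ Set.Ioc (0:ℝ) T, ∃ l : ℝ, Filter.Tendsto f (nhdsWithin t (Set.Iio t)) (nhds l))

variable {m0 : MeasurableSpace Ω}

/-- A nonnegative càdlàg adapted process on the time interval `[0,T]`. -/
structure IsProcess (P : Measure Ω) (ℱ : Filtration ℝ m0) (T : ℝ) (X : ℝ → Ω → ℝ) : Prop where
  adapted : ∀ t ∈ Set.Icc (0:ℝ) T, Measurable[ℱ t] (X t)
  cadlag : ∀ᵐ ω ∂P, CadlagOn T (fun t => X t ω)
  nonneg : ∀ᵐ ω ∂P, ∀ t ∈ Set.Icc (0:ℝ) T, 0 ≤ X t ω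

/-- A process is strictly positive if a.s. `inf_{t ∈ [0,T]} X_t > 0`. -/
def StrictlyPos (P : Measure Ω) (T : ℝ) (X : ℝ → Ω → ℝ) : Prop :=
  ∀ᵐ ω ∂P, 0 < ⨅ t : Set.Icc (0:ℝ) T, X t ω

/-- A wealth-process set: a set of nonnegative càdlàg adapted processes with unit
initial value, containing a strictly positive element, and fork-convex. -/
structure IsWealthProcessSet (P : Measure Ω) (ℱ : Filtration ℝ m0) (T : ℝ)
    (𝒳 : Set (ℝ → Ω → ℝ)) : Prop where
  proc : ∀ X ∈ 𝒳, IsProcess P ℱ T X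
  init_one : ∀ X ∈ 𝒳, ∀ᵐ ω ∂P, X 0 ω = 1
  exists_pos : ∃ X ∈ 𝒳, StrictlyPos P T X
  forkConvex : ∀ s ∈ Set.Icc (0:ℝ) T, ∀ X ∈ 𝒳, ∀ X' ∈ 𝒳, ∀ X'' ∈ 𝒳,
    StrictlyPos P T X' → StrictlyPos P T X'' →
    ∀ α : Ω → ℝ, Measurable[ℱ s] α → (∀ ω, α ω ∈ Set.Icc (0:ℝ) 1) →
      (fun t ω => if t < s then X t ω
        else α ω * (X s ω / X' s ω) * X' t ω
          + (1 - α ω) * (X s ω / X'' s ω) * X'' t ω) ∈ 𝒳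

/-- `ξ` is an arbitrage of the first kind for the wealth-process set `𝒳`. -/
def IsArbitrageOfFirstKind (P : Measure Ω) (T : ℝ) (𝒳 : Set (ℝ → Ω → ℝ))
    (ξ : Ω → ℝ) : Prop :=
  Measurable ξ ∧ (∀ᵐ ω ∂P, 0 ≤ ξ ω) ∧ P {ω | 0 < ξ ω} ≠ 0 ∧
    ∀ x : ℝ, 0 < x → ∃ X ∈ 𝒳, ∀ᵐ ω ∂P, ξ ω ≤ x * X T ω

/-- Condition NA₁: there is no arbitrage of the first kind. -/
def NA1 (P : Measure Ω) (T : ℝ) (𝒳 : Set (ℝ → Ω → ℝ)) : Prop :=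
  ¬ ∃ ξ : Ω → ℝ, IsArbitrageOfFirstKind P T 𝒳 ξ

/-- `Z` is a `Q`-supermartingale on `[0,T]` with respect to the filtration `ℱ`. -/
def SupermartingaleOn (Q : Measure Ω) (ℱ : Filtration ℝ m0) (T : ℝ)
    (Z : ℝ → Ω → ℝ) : Prop :=
  (∀ t ∈ Set.Icc (0:ℝ) T, Measurable[ℱ t] (Z t)) ∧
  (∀ t ∈ Set.Icc (0:ℝ) T, Integrable (Z t) Q) ∧
  ∀ s t : ℝ, 0 ≤ s → s ≤ t → t ≤ T → ∀ᵐ ω ∂Q, (Q[Z t | ℱ s]) ω ≤ Z s ω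

/-- `Z` is a `Q`-martingale on `[0,T]` with respect to the filtration `ℱ`. -/
def MartingaleOn (Q : Measure Ω) (ℱ : Filtration ℝ m0) (T : ℝ)
    (Z : ℝ → Ω → ℝ) : Prop :=
  (∀ t ∈ Set.Icc (0:ℝ) T, Measurable[ℱ t] (Z t)) ∧
  (∀ t ∈ Set.Icc (0:ℝ) T, Integrable (Z t) Q) ∧
  ∀ s t : ℝ, 0 ≤ s → s ≤ t → t ≤ T → (Q[Z t | ℱ s]) =ᵐ[Q] Z s

/-- The sequence `(Xⁿ)` of nonnegative processes Fatou-converges to `X`: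
there is a countable dense set `𝕋 ⊆ [0,T]` containing `T` such that a.s., for all
`t ∈ [0,T]`, `X_t` equals both the liminf of liminfs and the limsup of limsups of
`Xⁿ_s` as `𝕋 ∋ s ↓ t` (computed in the extended reals). -/
def FatouLim (P : Measure Ω) (T : ℝ) (Xn : ℕ → ℝ → Ω → ℝ) (X : ℝ → Ω → ℝ) : Prop :=
  ∃ 𝕋 : Set ℝ, 𝕋.Countable ∧ 𝕋 ⊆ Set.Icc (0:ℝ) T ∧ T ∈ 𝕋 ∧ Set.Icc (0:ℝ) T ⊆ closure 𝕋 ∧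
    ∀ᵐ ω ∂P, ∀ t ∈ Set.Icc (0:ℝ) T,
      ((X t ω : EReal) =
        Filter.liminf (fun s : ℝ =>
          Filter.liminf (fun n : ℕ => (Xn n s ω : EReal)) Filter.atTop)
          (nhdsWithin t (𝕋 ∩ Set.Ici t))) ∧
      ((X t ω : EReal) =
        Filter.limsup (fun s : ℝ =>
          Filter.limsup (fun n : ℕ => (Xn n s ω : EReal)) Filter.atTop)
          (nhdsWithin t (𝕋 ∩ Set.Ici t)))

/-- The Fatou-closure of `𝒳`: all nonnegative càdlàg adapted processes that are
Fatou-limits of `𝒳`-valued sequences. -/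
def FatouClosure (P : Measure Ω) (ℱ : Filtration ℝ m0) (T : ℝ)
    (𝒳 : Set (ℝ → Ω → ℝ)) : Set (ℝ → Ω → ℝ) :=
  {X | IsProcess P ℱ T X ∧
    ∃ Xn : ℕ → ℝ → Ω → ℝ, (∀ n, Xn n ∈ 𝒳) ∧ FatouLim P T Xn X}

/-- The process-polar `𝒳°` of `𝒳`. -/
def processPolar (P : Measure Ω) (ℱ : Filtration ℝ m0) (T : ℝ)
    (𝒳 : Set (ℝ → Ω → ℝ)) : Set (ℝ → Ω → ℝ) :=
  {Y | IsProcess P ℱ T Y ∧ (∀ᵐ ω ∂P, Y 0 ω ≤ 1) ∧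
    ∀ X ∈ 𝒳, SupermartingaleOn P ℱ T (fun t ω => Y t ω * X t ω)}

/-- The process-bipolar `𝒳°°` of `𝒳`. -/
def processBipolar (P : Measure Ω) (ℱ : Filtration ℝ m0) (T : ℝ)
    (𝒳 : Set (ℝ → Ω → ℝ)) : Set (ℝ → Ω → ℝ) :=
  {X | IsProcess P ℱ T X ∧ (∀ᵐ ω ∂P, X 0 ω ≤ 1) ∧
    ∀ Y ∈ processPolar P ℱ T 𝒳, SupermartingaleOn P ℱ T (fun t ω => Y t ω * X t ω)}

/-- The family `{X_t : X ∈ 𝒳, t ∈ [0,T]}` is bounded in probability. -/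
def FamilyBddInProb (P : Measure Ω) (T : ℝ) (𝒳 : Set (ℝ → Ω → ℝ)) : Prop :=
  Filter.Tendsto (fun l : ℝ => ⨆ X ∈ 𝒳, ⨆ t ∈ Set.Icc (0:ℝ) T, P {ω | l < X t ω})
    Filter.atTop (nhds 0)

/-- Uniform (on `[0,T]`) convergence in probability of `(Xⁿ)` to `X`. -/
def UnifTendstoInProb (P : Measure Ω) (T : ℝ) (Xn : ℕ → ℝ → Ω → ℝ)
    (X : ℝ → Ω → ℝ) : Prop :=
  ∀ ε : ℝ, 0 < ε →
    Filter.Tendsto (fun n => P {ω | ∃ t ∈ Set.Icc (0:ℝ) T, ε ≤ |Xn n t ω - X t ω|})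
      Filter.atTop (nhds 0)

/-- The positive part of an extended real, as an extended nonnegative real. -/
def erealPos (x : EReal) : ℝ≥0∞ := if x = ⊤ then ⊤ else ENNReal.ofReal x.toReal

/-- The utility function extended to `0` by `U(0) := lim_{x ↓ 0} U(x)` (an extended real). -/
def extUtil (U : ℝ → ℝ) (w : ℝ) : EReal :=
  if 0 < w then (U w : EReal)
  else Filter.liminf (fun x : ℝ => (U x : EReal)) (nhdsWithin 0 (Set.Ioi 0))

/-- The expected utility `E[U(W)]` as an extended real, with the convention that it
equals `−∞` whenever `E[min(0, U(W))] = −∞`. -/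
def expUtility (P : Measure Ω) (U : ℝ → ℝ) (W : Ω → ℝ) : EReal :=
  if (∫⁻ ω, erealPos (-(extUtil U (W ω))) ∂P) = ⊤ then ⊥
  else ((∫⁻ ω, erealPos (extUtil U (W ω)) ∂P : ℝ≥0∞) : EReal)
    - ((∫⁻ ω, erealPos (-(extUtil U (W ω))) ∂P : ℝ≥0∞) : EReal)

theorem CadlagOn.exists_bound {T : ℝ} {f : ℝ → ℝ} (hf : CadlagOn T f) :
    ∃ C : ℝ, ∀ t ∈ Set.Icc (0:ℝ) T, f t ≤ C := by
  refine (isCompact_Icc (a := (0:ℝ)) (b := T)).induction_on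
    (p := fun s => ∃ C : ℝ, ∀ t ∈ s, f t ≤ C) ⟨0, by simp⟩ ?_ ?_ ?_
  · rintro s t hst ⟨C, hC⟩
    exact ⟨C, fun x hx => hC x (hst hx)⟩
  · rintro s t ⟨C, hC⟩ ⟨D, hD⟩
    refine ⟨max C D, ?_⟩
    rintro x (hx | hx)
    · exact (hC x hx).trans (le_max_left _ _)
    · exact (hD x hx).trans (le_max_right _ _)
  · intro x hx
    have hL : ∃ C : ℝ, ∀ᶠ y in 𝓝 x, y ∈ Set.Icc (0:ℝ) T → y < x → f y ≤ C := by
      rcases hx.1.eq_or_lt with h0 | h0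
      · exact ⟨0, Eventually.of_forall fun y hy hyx => absurd hy.1 (by linarith)⟩
      · obtain ⟨l, hl⟩ := hf.2 x ⟨h0, hx.2⟩
        have := hl.eventually_le_const (lt_add_one l)
        rw [eventually_nhdsWithin_iff] at this
        exact ⟨l + 1, this.mono fun y hy _ hyx => hy hyx⟩
    have hR : ∃ C : ℝ, ∀ᶠ y in 𝓝 x, y ∈ Set.Icc (0:ℝ) T → x ≤ y → f y ≤ C := by
      rcases hx.2.eq_or_lt with h0 | h0
      · refine ⟨f x, Eventually.of_forall fun y hy hyx => ?_⟩
        have : y = x := le_antisymm (h0 ▸ hy.2) hyx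
        rw [this]
      · have := (hf.1 x ⟨hx.1, h0⟩).eventually_le_const (lt_add_one (f x))
        rw [eventually_nhdsWithin_iff] at this
        exact ⟨f x + 1, this.mono fun y hy _ hyx => hy hyx⟩
    obtain ⟨C, hC⟩ := hL
    obtain ⟨D, hD⟩ := hR
    refine ⟨{y | y ∈ Set.Icc (0:ℝ) T ∧ f y ≤ max C D}, ?_, max C D, fun y hy => hy.2⟩
    rw [mem_nhdsWithin_iff_eventually]
    filter_upwards [hC, hD] with y h1 h2 hy
    refine ⟨hy, ?_⟩
    rcases lt_or_ge y x with h | h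
    · exact (h1 hy h).trans (le_max_left _ _)
    · exact (h2 hy h).trans (le_max_right _ _)

theorem CadlagOn.le_of_rat {T : ℝ} {f : ℝ → ℝ} (hf : CadlagOn T f) {c : ℝ}
    (hq : ∀ q : ℚ, (q:ℝ) ∈ Set.Icc (0:ℝ) T → f q ≤ c) {t : ℝ} (ht : t ∈ Set.Ico (0:ℝ) T) :
    f t ≤ c := by
  by_contra! h
  have := (hf.1 t ht).eventually_const_lt h
  have h2 : ∀ᶠ y in 𝓝[>] t, c < f y := this.filter_mono (nhdsWithin_mono _ Set.Ioi_subset_Ici_self)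
  obtain ⟨u, hu, hu2⟩ := (mem_nhdsGT_iff_exists_Ioo_subset' ht.2).1 h2
  obtain ⟨q, hq1, hq2⟩ := exists_rat_btwn (lt_min hu ht.2)
  have h3 : c < f q := hu2 ⟨hq1, hq2.trans_le (min_le_left _ _)⟩
  exact absurd (hq q ⟨ht.1.trans hq1.le, (hq2.trans_le (min_le_right _ _)).le⟩) (not_le.2 h3)

theorem StrictlyPos.pos {P : Measure Ω} {T : ℝ} {Y : ℝ → Ω → ℝ} (hY : StrictlyPos P T Y) :
    ∀ᵐ ω ∂P, ∀ t ∈ Set.Icc (0:ℝ) T, 0 < Y t ω := by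
  filter_upwards [hY] with ω hω t ht
  have hb : BddBelow (Set.range fun t : Set.Icc (0:ℝ) T => Y t ω) := by
    by_contra hb
    rw [Real.iInf_of_not_bddBelow hb] at hω
    exact lt_irrefl _ hω
  exact hω.trans_le (ciInf_le hb ⟨t, ht⟩)

theorem familyBddInProb_of_terminalBddInProb
    {Ω : Type*} {m0 : MeasurableSpace Ω} (P : Measure Ω) [IsProbabilityMeasure P]
    (ℱ : Filtration ℝ m0) (T : ℝ) (hT : 0 < T)
    (hF_rightCont : ∀ t : ℝ, ℱ t = ⨅ s ∈ Set.Ioi t, ℱ s)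
    (hF_complete : ∀ (t : ℝ) (A : Set Ω), P A = 0 → MeasurableSet[ℱ t] A)
    (𝒳 : Set (ℝ → Ω → ℝ)) (h𝒳 : IsWealthProcessSet P ℱ T 𝒳)
    (hterm : Filter.Tendsto (fun l : ℝ => ⨆ X ∈ 𝒳, P {ω | l < X T ω})
      Filter.atTop (nhds 0)) :
    FamilyBddInProb P T 𝒳 := by
  obtain ⟨Y, hY, hYpos⟩ := h𝒳.exists_pos
  have hYp := h𝒳.proc Y hY
  have hmeas : ∀ t ∈ Set.Icc (0:ℝ) T, Measurable (Y t) :=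
    fun t ht => (hYp.adapted t ht).mono (ℱ.le t) le_rfl
  have hTm : T ∈ Set.Icc (0:ℝ) T := ⟨hT.le, le_rfl⟩
  set A : ℕ → Set Ω := fun n => ⋃ q : ℚ, ⋃ _ : (q:ℝ) ∈ Set.Icc (0:ℝ) T,
    {ω | ((n:ℝ) + 1) * |Y T ω| < Y q ω} with hA
  have hAmeas : ∀ n, MeasurableSet (A n) := fun n =>
    MeasurableSet.iUnion fun q => MeasurableSet.iUnion fun hq =>
      measurableSet_lt (((hmeas T hTm).abs).const_mul _) (hmeas q hq)
  have hAanti : Antitone A := by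
    intro m n hmn ω hω
    simp only [hA, Set.mem_iUnion, Set.mem_ofPred_eq] at hω ⊢
    obtain ⟨q, hq, h⟩ := hω
    refine ⟨q, hq, lt_of_le_of_lt ?_ h⟩
    have : (m:ℝ) ≤ n := by exact_mod_cast hmn
    gcongr
  have hAnull : P (⋂ n, A n) = 0 := by
    rw [measure_eq_zero_iff_ae_notMem]
    filter_upwards [hYp.cadlag, hYpos.pos] with ω h1 h2 h3
    obtain ⟨C, hC⟩ := h1.exists_bound
    have hTp := h2 T hTm
    obtain ⟨n, hn⟩ := exists_nat_ge (C / Y T ω)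
    have h4 := Set.mem_iInter.1 h3 n
    simp only [hA, Set.mem_iUnion, Set.mem_ofPred_eq] at h4
    obtain ⟨q, hq, h⟩ := h4
    rw [abs_of_pos hTp] at h
    have h5 := hC q hq
    rw [div_le_iff₀ hTp] at hn
    nlinarith
  have hAlim : Tendsto (fun n => P (A n)) atTop (𝓝 0) := by
    rw [← hAnull]
    exact tendsto_measure_iInter_atTop (fun n => (hAmeas n).nullMeasurableSet) hAanti
      ⟨0, measure_ne_top _ _⟩
  unfold FamilyBddInProb
  rw [ENNReal.tendsto_nhds_zero]
  intro ε hε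
  have hε2 : (0:ℝ≥0∞) < ε / 2 := ENNReal.half_pos hε.ne'
  obtain ⟨n, hn⟩ := ((ENNReal.tendsto_nhds_zero.1 hAlim) _ hε2).exists
  obtain ⟨L, hL⟩ := ((ENNReal.tendsto_nhds_zero.1 hterm) _ hε2).exists
  filter_upwards [eventually_ge_atTop (((n:ℝ) + 1) * L)] with l hl
  refine iSup₂_le fun X hX => iSup₂_le fun t ht => ?_
  have hZ := h𝒳.forkConvex t ht X hX Y hY Y hY hYpos hYpos (fun _ => 1) measurable_const
    (fun _ => ⟨zero_le_one, le_rfl⟩)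
  have hZL := (le_iSup₂ (f := fun (X : ℝ → Ω → ℝ) (_ : X ∈ 𝒳) => P {ω | L < X T ω}) _ hZ).trans hL
  simp only [not_lt.2 ht.2, if_false] at hZL
  calc P {ω | l < X t ω} ≤ P (A n ∪ {ω | L < 1 * (X t ω / Y t ω) * Y T ω
          + (1 - 1) * (X t ω / Y t ω) * Y T ω}) := by
        apply measure_mono_ae
        filter_upwards [hYp.cadlag, hYpos.pos, (h𝒳.proc X hX).nonneg] with ω h1 h2 h3 h4
        by_cases hωA : ω ∈ A n
        · exact Or.inl hωA
        right
        have hTp := h2 T hTm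
        have htp := h2 t ht
        have hX0 := h3 t ht
        have h5 : Y t ω ≤ ((n:ℝ) + 1) * Y T ω := by
          rcases ht.2.eq_or_lt with h | h
          · rw [h]
            nlinarith [(Nat.cast_nonneg n : (0:ℝ) ≤ n)]
          · refine h1.le_of_rat (fun q hq => ?_) ⟨ht.1, h⟩
            by_contra! h6
            apply hωA
            simp only [hA, Set.mem_iUnion, Set.mem_ofPred_eq]
            exact ⟨q, hq, by rwa [abs_of_pos hTp]⟩
        have h4' : l < X t ω := h4
        show L < 1 * (X t ω / Y t ω) * Y T ω + (1 - 1) * (X t ω / Y t ω) * Y T ω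
        have h6 : X t ω ≤ ((n:ℝ) + 1) * (X t ω / Y t ω * Y T ω) := by
          calc X t ω = X t ω / Y t ω * Y t ω := by field_simp
            _ ≤ X t ω / Y t ω * (((n:ℝ) + 1) * Y T ω) :=
                mul_le_mul_of_nonneg_left h5 (div_nonneg hX0 htp.le)
            _ = _ := by ring
        have h7 : ((n:ℝ) + 1) * L < ((n:ℝ) + 1) * (X t ω / Y t ω * Y T ω) := by linarith
        have h8 := lt_of_mul_lt_mul_left h7 (by positivity)
        linarith
    _ ≤ P (A n) + _ := measure_union_le _ _
    _ ≤ ε / 2 + ε / 2 := add_le_add hn hZL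
    _ = ε := ENNReal.add_halves ε

end WPS
end
end

section
/- Suppose (Z^n)_{n∈ℕ} is a sequence of nonnegative càdlàg P-supermartingales indexed by [0,T] such that Z^n_0 ≤ 1 almost surely for every n, and Z^n_T → 1 in P-probability as n → ∞. Then Z^n → 1 uniformly on [0,T] in probability: sup_{t∈[0,T]} |Z^n_t − 1| → 0 in P-probability as n → ∞. -/
open MeasureTheory Filter Set Topology
open scoped ENNReal

noncomputable section

namespace WPS

variable {Ω : Type*}

variable {m0 : MeasurableSpace Ω}

section Aux

/-- Upper maximal estimate for a discrete supermartingale. -/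
lemma aux_upper {Ω : Type*} {m0 : MeasurableSpace Ω} (P : Measure Ω) [IsProbabilityMeasure P]
    (G : ℕ → MeasurableSpace Ω) (hG : Monotone G) (hGle : ∀ k, G k ≤ m0)
    (X : ℕ → Ω → ℝ) (hm : ∀ k, Measurable[G k] (X k)) (hi : ∀ k, Integrable (X k) P)
    (hs : ∀ k A, MeasurableSet[G k] A → ∫ ω in A, X (k+1) ω ∂P ≤ ∫ ω in A, X k ω ∂P)
    (h0 : ∫ ω, X 0 ω ∂P ≤ 1) (c : ℝ) (k : ℕ) :
    ∫ ω in {ω | ∃ j < k, c ≤ X j ω}ᶜ, X k ω ∂P + c * P.real {ω | ∃ j < k, c ≤ X j ω} ≤ 1 := by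
  have hmeas : ∀ k, MeasurableSet[G k] {ω | ∃ j < k + 1, c ≤ X j ω} := by
    intro k
    have : {ω | ∃ j < k + 1, c ≤ X j ω} = ⋃ j ∈ Finset.range (k+1), {ω | c ≤ X j ω} := by
      ext ω; simp
    rw [this]
    refine Finset.measurableSet_biUnion _ fun j hj => ?_
    have hj' : j ≤ k := by simpa [Nat.lt_succ_iff] using hj
    exact hG hj' _ (hm j measurableSet_Ici)
  have hmeas' : ∀ k, MeasurableSet {ω | ∃ j < k, c ≤ X j ω} := by
    intro k
    cases k with
    | zero => simp
    | succ k => exact hGle k _ (hmeas k)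
  induction k with
  | zero => simpa using h0
  | succ k ih =>
    set A := {ω | ∃ j < k, c ≤ X j ω} with hA
    set B := {ω | ∃ j < k + 1, c ≤ X j ω} with hB
    have hAB : A ⊆ B := by
      rintro ω ⟨j, hj, h⟩; exact ⟨j, by omega, h⟩
    have h1 := hs k Bᶜ (hmeas k).compl
    have h2 : ∫ ω in Aᶜ ∩ B, X k ω ∂P + ∫ ω in Aᶜ \ B, X k ω ∂P = ∫ ω in Aᶜ, X k ω ∂P :=
      integral_inter_add_sdiff (hmeas' (k+1)) (hi k).integrableOn
    have e1 : Aᶜ \ B = Bᶜ := by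
      ext ω; simp only [Set.mem_sdiff, mem_compl_iff]
      exact ⟨fun h => h.2, fun h => ⟨fun h' => h (hAB h'), h⟩⟩
    have e2 : Aᶜ ∩ B = B \ A := by
      ext ω; simp only [Set.mem_sdiff, mem_compl_iff, mem_inter_iff]; tauto
    have h3 : c * P.real (B \ A) ≤ ∫ ω in B \ A, X k ω ∂P := by
      refine setIntegral_ge_of_const_le_real ((hmeas' (k+1)).diff (hmeas' k)) (measure_ne_top _ _) ?_
        (hi k).integrableOn
      rintro ω ⟨⟨j, hj, h⟩, h'⟩
      rcases Nat.lt_succ_iff_lt_or_eq.1 hj with hj' | rfl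
      · exact absurd ⟨j, hj', h⟩ h'
      · exact h
    have h4 : P.real (B \ A) = P.real B - P.real A := measureReal_sdiff hAB (hmeas' k)
    rw [e1, e2] at h2
    rw [h4] at h3
    nlinarith

/-- Lower maximal estimate for a discrete supermartingale. -/
lemma aux_lower {Ω : Type*} {m0 : MeasurableSpace Ω} (P : Measure Ω) [IsProbabilityMeasure P]
    (G : ℕ → MeasurableSpace Ω) (hG : Monotone G) (hGle : ∀ k, G k ≤ m0)
    (X : ℕ → Ω → ℝ) (hm : ∀ k, Measurable[G k] (X k)) (hi : ∀ k, Integrable (X k) P)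
    (hs : ∀ k A, MeasurableSet[G k] A → ∫ ω in A, X (k+1) ω ∂P ≤ ∫ ω in A, X k ω ∂P)
    (c : ℝ) (k : ℕ) :
    ∫ ω in {ω | ∃ j < k, X j ω ≤ c}, X k ω ∂P ≤ c * P.real {ω | ∃ j < k, X j ω ≤ c} := by
  have hmeas : ∀ k, MeasurableSet[G k] {ω | ∃ j < k + 1, X j ω ≤ c} := by
    intro k
    have : {ω | ∃ j < k + 1, X j ω ≤ c} = ⋃ j ∈ Finset.range (k+1), {ω | X j ω ≤ c} := by
      ext ω; simp
    rw [this]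
    refine Finset.measurableSet_biUnion _ fun j hj => ?_
    have hj' : j ≤ k := by simpa [Nat.lt_succ_iff] using hj
    exact hG hj' _ (hm j measurableSet_Iic)
  have hmeas' : ∀ k, MeasurableSet {ω | ∃ j < k, X j ω ≤ c} := by
    intro k
    cases k with
    | zero => simp
    | succ k => exact hGle k _ (hmeas k)
  induction k with
  | zero => simp
  | succ k ih =>
    set A := {ω | ∃ j < k, X j ω ≤ c} with hA
    set B := {ω | ∃ j < k + 1, X j ω ≤ c} with hB
    have hAB : A ⊆ B := by
      rintro ω ⟨j, hj, h⟩; exact ⟨j, by omega, h⟩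
    have h1 := hs k B (hmeas k)
    have h2 : ∫ ω in B ∩ A, X k ω ∂P + ∫ ω in B \ A, X k ω ∂P = ∫ ω in B, X k ω ∂P :=
      integral_inter_add_sdiff (hmeas' k) (hi k).integrableOn
    have h3 : ∫ ω in B \ A, X k ω ∂P ≤ c * P.real (B \ A) := by
      have : ∫ ω in B \ A, X k ω ∂P ≤ ∫ ω in B \ A, c ∂P := by
        refine setIntegral_mono_on (hi k).integrableOn (integrable_const c).integrableOn
          ((hmeas' (k+1)).diff (hmeas' k)) ?_
        rintro ω ⟨⟨j, hj, h⟩, h'⟩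
        rcases Nat.lt_succ_iff_lt_or_eq.1 hj with hj' | rfl
        · exact absurd ⟨j, hj', h⟩ h'
        · exact h
      rwa [setIntegral_const, smul_eq_mul, mul_comm] at this
    have h4 : P.real (B \ A) = P.real B - P.real A := measureReal_sdiff hAB (hmeas' k)
    rw [inter_eq_right.2 hAB] at h2
    rw [h4] at h3
    nlinarith

/-- A random variable close to one in probability has large integrals. -/
lemma aux_low {Ω : Type*} {m0 : MeasurableSpace Ω} (P : Measure Ω) [IsProbabilityMeasure P]
    (X : Ω → ℝ) (hm : Measurable X) (hi : Integrable X P) (hn : ∀ᵐ ω ∂P, 0 ≤ X ω)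
    (η : ℝ) (hη : 0 ≤ η) (D : Set Ω) :
    P.real D - η - P.real {ω | η ≤ |X ω - 1|} ≤ ∫ ω in D, X ω ∂P := by
  set E := {ω | η ≤ |X ω - 1|} with hE
  have hEm : MeasurableSet E :=
    measurableSet_le measurable_const ((hm.sub measurable_const).abs)
  have hint : Integrable (E.indicator (fun _ => (1:ℝ))) P := (integrable_const 1).indicator hEm
  have h1 : ∫ ω in D, ((1 - η) - E.indicator (fun _ => (1:ℝ)) ω) ∂P ≤ ∫ ω in D, X ω ∂P := by
    refine setIntegral_mono_ae ((integrable_const _).sub hint).integrableOn hi.integrableOn ?_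
    filter_upwards [hn] with ω hω
    by_cases h : ω ∈ E
    · simp only [indicator_of_mem h]; linarith
    · simp only [indicator_of_notMem h]
      have : |X ω - 1| < η := not_le.1 h
      linarith [(abs_lt.1 this).1]
  rw [integral_sub (integrable_const _).integrableOn hint.integrableOn, setIntegral_const,
    integral_indicator hEm, setIntegral_const, smul_eq_mul, smul_eq_mul, mul_one] at h1
  have h2 : (P.restrict D).real E ≤ P.real E := by
    rw [measureReal_restrict_apply hEm]
    exact measureReal_mono inter_subset_left
  have h3 : P.real D ≤ 1 := measureReal_le_one
  nlinarith

/-- Two-sided maximal estimate for a discrete supermartingale. -/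
lemma aux_disc {Ω : Type*} {m0 : MeasurableSpace Ω} (P : Measure Ω) [IsProbabilityMeasure P]
    (G : ℕ → MeasurableSpace Ω) (hG : Monotone G) (hGle : ∀ k, G k ≤ m0)
    (X : ℕ → Ω → ℝ) (hm : ∀ k, Measurable[G k] (X k)) (hi : ∀ k, Integrable (X k) P)
    (hs : ∀ k A, MeasurableSet[G k] A → ∫ ω in A, X (k+1) ω ∂P ≤ ∫ ω in A, X k ω ∂P)
    (h0 : ∫ ω, X 0 ω ∂P ≤ 1) (k : ℕ) (hn : ∀ᵐ ω ∂P, 0 ≤ X k ω) (η : ℝ) (hη : 0 ≤ η)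
    (ε : ℝ) (hε : 0 < ε) :
    ε * P.real {ω | ∃ j < k, ε ≤ |X j ω - 1|}
      ≤ 2 * (η + P.real {ω | η ≤ |X k ω - 1|}) := by
  have hu := aux_upper P G hG hGle X hm hi hs h0 (1 + ε) k
  have hl := aux_lower P G hG hGle X hm hi hs (1 - ε) k
  have hX : Measurable (X k) := (hm k).mono (hGle k) le_rfl
  have h1 := aux_low P (X k) hX (hi k) hn η hη {ω | ∃ j < k, 1 + ε ≤ X j ω}ᶜ
  have h2 := aux_low P (X k) hX (hi k) hn η hη {ω | ∃ j < k, X j ω ≤ 1 - ε}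
  have hAm : MeasurableSet {ω | ∃ j < k, 1 + ε ≤ X j ω} := by
    have : {ω | ∃ j < k, 1 + ε ≤ X j ω} = ⋃ j ∈ Finset.range k, {ω | 1 + ε ≤ X j ω} := by
      ext ω; simp
    rw [this]
    exact Finset.measurableSet_biUnion _ fun j hj =>
      measurableSet_le measurable_const ((hm j).mono (hGle j) le_rfl)
  rw [probReal_compl_eq_one_sub hAm] at h1
  have h3 : P.real {ω | ∃ j < k, ε ≤ |X j ω - 1|} ≤
      P.real {ω | ∃ j < k, 1 + ε ≤ X j ω} + P.real {ω | ∃ j < k, X j ω ≤ 1 - ε} := by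
    refine (measureReal_mono ?_).trans (measureReal_union_le _ _)
    rintro ω ⟨j, hj, h⟩
    rcases le_abs.1 h with h | h
    · exact Or.inl ⟨j, hj, by linarith⟩
    · exact Or.inr ⟨j, hj, by linarith⟩
  nlinarith

/-- Dyadic grid on `[0,T]`, stopped at `T`. -/
def grid (T : ℝ) (m k : ℕ) : ℝ := min (T * k / 2 ^ m) T

lemma grid_mem {T : ℝ} (hT : 0 < T) (m k : ℕ) : grid T m k ∈ Icc 0 T :=
  ⟨le_min (by positivity) hT.le, min_le_right _ _⟩

lemma grid_mono {T : ℝ} (hT : 0 < T) (m : ℕ) : Monotone (grid T m) := by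
  intro a b hab
  unfold grid
  gcongr

lemma grid_zero {T : ℝ} (hT : 0 < T) (m : ℕ) : grid T m 0 = 0 := by
  simp [grid, hT.le]

lemma grid_end {T : ℝ} (hT : 0 < T) (m k : ℕ) (hk : 2 ^ m ≤ k) : grid T m k = T := by
  unfold grid
  refine min_eq_right ?_
  rw [le_div_iff₀ (by positivity)]
  have : ((2:ℝ) ^ m) ≤ k := by exact_mod_cast hk
  gcongr

lemma grid_succ (T : ℝ) (m k : ℕ) : grid T (m+1) (2 * k) = grid T m k := by
  unfold grid
  congr 1
  push_cast
  field_simp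
  ring

/-- Estimate on all of `[0,T]`. -/
lemma aux_cont {Ω : Type*} {m0 : MeasurableSpace Ω} (P : Measure Ω) [IsProbabilityMeasure P]
    (ℱ : Filtration ℝ m0) (T : ℝ) (hT : 0 < T) (Z : ℝ → Ω → ℝ)
    (hp : IsProcess P ℱ T Z) (hs : SupermartingaleOn P ℱ T Z)
    (h0 : ∀ᵐ ω ∂P, Z 0 ω ≤ 1) (η : ℝ) (hη : 0 ≤ η) (ε : ℝ) (hε : 0 < ε) :
    P {ω | ∃ t ∈ Icc (0:ℝ) T, 2 * ε ≤ |Z t ω - 1|} ≤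
      ENNReal.ofReal (2 * (η + P.real {ω | η ≤ |Z T ω - 1|}) / ε) := by
  obtain ⟨had, hint, hsup⟩ := hs
  set S : ℕ → Set Ω := fun m => {ω | ∃ j < 2 ^ m + 1, ε ≤ |Z (grid T m j) ω - 1|} with hS
  have hSm : Monotone S := by
    refine monotone_nat_of_le_succ fun m => ?_
    rintro ω ⟨j, hj, h⟩
    exact ⟨2 * j, by rw [pow_succ]; omega, by rwa [grid_succ]⟩
  have hSb : ∀ m, P (S m) ≤
      ENNReal.ofReal (2 * (η + P.real {ω | η ≤ |Z T ω - 1|}) / ε) := by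
    intro m
    have hend : grid T m (2 ^ m + 1) = T := grid_end hT _ _ (by omega)
    have := aux_disc P (fun k => ℱ (grid T m k)) (fun a b hab => ℱ.mono (grid_mono hT m hab))
      (fun k => ℱ.le _) (fun k => Z (grid T m k)) (fun k => had _ (grid_mem hT m k))
      (fun k => hint _ (grid_mem hT m k)) ?_ ?_ (2 ^ m + 1) ?_ η hη ε hε
    · simp only [hend] at this
      rw [← ENNReal.ofReal_toReal (measure_ne_top P (S m))]
      refine ENNReal.ofReal_le_ofReal ?_
      rw [le_div_iff₀ hε, mul_comm]
      exact this
    · intro k A hA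
      rw [← setIntegral_condExp (ℱ.le (grid T m k)) (hint _ (grid_mem hT m (k+1))) hA]
      exact setIntegral_mono_ae integrable_condExp.integrableOn
        (hint _ (grid_mem hT m k)).integrableOn
        (hsup _ _ (grid_mem hT m k).1 (grid_mono hT m k.le_succ) (grid_mem hT m (k+1)).2)
    · simp only [grid_zero hT]
      have : ∫ ω, Z 0 ω ∂P ≤ ∫ ω, (1:ℝ) ∂P :=
        integral_mono_ae (hint 0 ⟨le_rfl, hT.le⟩) (integrable_const _) h0
      simpa using this
    · filter_upwards [hp.nonneg] with ω hω
      exact hω _ (grid_mem hT m _)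
  have hU : P (⋃ m, S m) ≤
      ENNReal.ofReal (2 * (η + P.real {ω | η ≤ |Z T ω - 1|}) / ε) := by
    rw [hSm.measure_iUnion]
    exact iSup_le hSb
  refine le_trans (measure_mono_ae ?_) hU
  filter_upwards [hp.cadlag] with ω hω
  rintro ⟨t, ht, h⟩
  rcases ht.2.eq_or_lt with rfl | htT
  · exact mem_iUnion.2 ⟨0, 1, by norm_num, by rw [grid_end hT _ _ (by norm_num)]; linarith⟩
  · have hc := hω.1 t ⟨ht.1, htT⟩
    have ha : 0 ≤ t / T := div_nonneg ht.1 hT.le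
    have hlim : Tendsto (fun m : ℕ => grid T m ⌈t / T * 2 ^ m⌉₊) atTop (𝓝 t) := by
      have h1 := (tendsto_nat_ceil_mul_div_atTop ha).comp
        (tendsto_pow_atTop_atTop_of_one_lt (one_lt_two : (1:ℝ) < 2))
      have h2 := (h1.const_mul T).min (tendsto_const_nhds (x := T))
      rw [mul_div_cancel₀ _ hT.ne', min_eq_left ht.2] at h2
      refine h2.congr fun m => ?_
      simp only [grid, Function.comp, mul_div_assoc]
    have hge : ∀ m : ℕ, t ≤ grid T m ⌈t / T * 2 ^ m⌉₊ := by
      intro m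
      refine le_min ?_ ht.2
      rw [le_div_iff₀ (by positivity)]
      calc t * 2 ^ m = T * (t / T * 2 ^ m) := by field_simp
        _ ≤ _ := by gcongr; exact Nat.le_ceil _
    have hlim' : Tendsto (fun m : ℕ => grid T m ⌈t / T * 2 ^ m⌉₊) atTop (𝓝[Ici t] t) :=
      tendsto_nhdsWithin_iff.2 ⟨hlim, Eventually.of_forall hge⟩
    have h3 : Tendsto (fun m : ℕ => |Z (grid T m ⌈t / T * 2 ^ m⌉₊) ω - 1|) atTop
        (𝓝 |Z t ω - 1|) := ((hc.tendsto.comp hlim').sub_const 1).abs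
    obtain ⟨m, hm⟩ := (h3.eventually_const_lt (show ε < |Z t ω - 1| by linarith)).exists
    refine mem_iUnion.2 ⟨m, ⌈t / T * 2 ^ m⌉₊, ?_, hm.le⟩
    rw [Nat.lt_succ_iff]
    refine Nat.ceil_le.2 ?_
    push_cast
    have : t / T ≤ 1 := (div_le_one hT).2 ht.2
    nlinarith [show (0:ℝ) < 2 ^ m by positivity]

end Aux

theorem supermartingale_ucp_convergence
    {Ω : Type*} {m0 : MeasurableSpace Ω} (P : Measure Ω) [IsProbabilityMeasure P]
    (ℱ : Filtration ℝ m0) (T : ℝ) (hT : 0 < T)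
    (hF_rightCont : ∀ t : ℝ, ℱ t = ⨅ s ∈ Set.Ioi t, ℱ s)
    (hF_complete : ∀ (t : ℝ) (A : Set Ω), P A = 0 → MeasurableSet[ℱ t] A)
    (Z : ℕ → ℝ → Ω → ℝ)
    (hZ_proc : ∀ n, IsProcess P ℱ T (Z n))
    (hZ_sup : ∀ n, SupermartingaleOn P ℱ T (Z n))
    (hZ0 : ∀ n, ∀ᵐ ω ∂P, Z n 0 ω ≤ 1)
    (hZT : TendstoInMeasure P (fun n => Z n T) Filter.atTop (fun _ => (1:ℝ)))
    :
    UnifTendstoInProb P T Z (fun _ _ => (1:ℝ)) := by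
  intro ε hε
  rw [ENNReal.tendsto_nhds_zero]
  intro δ hδ
  obtain ⟨r, hr0, hrδ⟩ : ∃ r : ℝ, 0 < r ∧ ENNReal.ofReal r ≤ δ := by
    by_cases h : δ = ⊤
    · exact ⟨1, one_pos, by simp [h]⟩
    · exact ⟨δ.toReal, ENNReal.toReal_pos hδ.ne' h, by rw [ENNReal.ofReal_toReal h]⟩
  set η : ℝ := r * (ε / 2) / 4 with hη
  have hηpos : 0 < η := by positivity
  have hconv := (tendstoInMeasure_iff_measureReal_dist.1 hZT) η hηpos
  filter_upwards [hconv.eventually_lt_const hηpos] with n hn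
  refine le_trans ?_ hrδ
  have key := aux_cont P ℱ T hT (Z n) (hZ_proc n) (hZ_sup n) (hZ0 n) η hηpos.le (ε / 2)
    (by positivity)
  rw [show 2 * (ε / 2) = ε by ring] at key
  refine key.trans (ENNReal.ofReal_le_ofReal ?_)
  simp only [Real.dist_eq] at hn
  rw [div_le_iff₀ (by positivity)]
  linarith

end WPS
end
end

section
/- Suppose (Z^n)_{n∈ℕ} is a sequence of nonnegative càdlàg P-supermartingales indexed by [0,T] such that Z^n_0 ≤ 1 almost surely for every n, and Z^n_T → 1 in P-probability as n → ∞. Then for every ε ∈ (0,∞), lim_{n→∞} P[sup_{t∈[0,T]} Z^n_t > 1 + ε] = 0. -/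
open MeasureTheory Filter Set Topology
open scoped ENNReal

noncomputable section

namespace WPS

variable {Ω : Type*}

variable {m0 : MeasurableSpace Ω}

/-- The set of outcomes where the process exceeds `c` at one of the times `t 0, …, t k`. -/
def exceedSet (Z : ℝ → Ω → ℝ) (t : ℕ → ℝ) (c : ℝ) : ℕ → Set Ω
  | 0 => {ω | c < Z (t 0) ω}
  | (k+1) => exceedSet Z t c k ∪ {ω | c < Z (t (k+1)) ω}

lemma mem_exceedSet (Z : ℝ → Ω → ℝ) (t : ℕ → ℝ) (c : ℝ) (k : ℕ) (ω : Ω) :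
    ω ∈ exceedSet Z t c k ↔ ∃ j ≤ k, c < Z (t j) ω := by
  induction k with
  | zero => simp [exceedSet]
  | succ k ih =>
    simp only [exceedSet, Set.mem_union, ih, Set.mem_setOf_eq]
    constructor
    · rintro (⟨j, hj, h⟩ | h)
      · exact ⟨j, by omega, h⟩
      · exact ⟨k+1, le_rfl, h⟩
    · rintro ⟨j, hj, h⟩
      rcases Nat.lt_or_ge j (k+1) with h1 | h1
      · exact Or.inl ⟨j, by omega, h⟩
      · obtain rfl : j = k+1 := by omega
        exact Or.inr h

lemma measurableSet_exceedSet (ℱ : Filtration ℝ m0) (T : ℝ) (Z : ℝ → Ω → ℝ)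
    (hZ : ∀ t ∈ Set.Icc (0:ℝ) T, Measurable[ℱ t] (Z t))
    (t : ℕ → ℝ) (ht : Monotone t) (c : ℝ) (k : ℕ)
    (htT : ∀ j ≤ k, t j ∈ Set.Icc (0:ℝ) T) :
    MeasurableSet[ℱ (t k)] (exceedSet Z t c k) := by
  induction k with
  | zero => exact (hZ _ (htT 0 le_rfl)) measurableSet_Ioi
  | succ k ih =>
    refine MeasurableSet.union ?_ ((hZ _ (htT (k+1) le_rfl)) measurableSet_Ioi)
    exact ℱ.mono (ht (Nat.le_succ k)) _ (ih fun j hj => htT j (by omega))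

/-- Discrete maximal inequality for supermartingales, keeping the terminal term. -/
lemma discrete_maximal (P : Measure Ω) [IsProbabilityMeasure P]
    (ℱ : Filtration ℝ m0) (T : ℝ) (Z : ℝ → Ω → ℝ) (hZ : SupermartingaleOn P ℱ T Z)
    (t : ℕ → ℝ) (ht : Monotone t) (c : ℝ) (k : ℕ)
    (htT : ∀ j ≤ k, t j ∈ Set.Icc (0:ℝ) T) :
    c * P.real (exceedSet Z t c k) + ∫ ω in (exceedSet Z t c k)ᶜ, Z (t k) ω ∂P
      ≤ ∫ ω, Z (t 0) ω ∂P := by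
  obtain ⟨hm, hi, hs⟩ := hZ
  induction k with
  | zero =>
    have hA := ℱ.le _ _ (measurableSet_exceedSet ℱ T Z hm t ht c 0 htT)
    have h0 := hi _ (htT 0 le_rfl)
    rw [← integral_add_compl hA h0]
    gcongr
    exact setIntegral_ge_of_const_le_real hA (measure_ne_top _ _)
      (fun x hx => le_of_lt hx) h0.integrableOn
  | succ k ih =>
    have htk : ∀ j ≤ k, t j ∈ Set.Icc (0:ℝ) T := fun j hj => htT j (by omega)
    have hAm := measurableSet_exceedSet ℱ T Z hm t ht c k htk
    have hA := ℱ.le _ _ hAm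
    have h1 := hi _ (htT (k+1) le_rfl)
    have h0 := hi _ (htk k le_rfl)
    have hD : MeasurableSet {ω | c < Z (t (k+1)) ω} :=
      ℱ.le _ _ ((hm _ (htT (k+1) le_rfl)) measurableSet_Ioi)
    refine le_trans ?_ (ih htk)
    set A := exceedSet Z t c k with hAdef
    set D := {ω | c < Z (t (k+1)) ω} with hDdef
    have e : exceedSet Z t c (k+1) = A ∪ D := rfl
    have step : ∫ ω in Aᶜ, Z (t (k+1)) ω ∂P ≤ ∫ ω in Aᶜ, Z (t k) ω ∂P := by
      rw [← setIntegral_condExp (ℱ.le (t k)) h1 hAm.compl]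
      exact setIntegral_mono_ae integrable_condExp.integrableOn h0.integrableOn
        (hs _ _ (htk k le_rfl).1 (ht (Nat.le_succ k)) (htT (k+1) le_rfl).2)
    have split := integral_inter_add_sdiff (μ := P) (s := Aᶜ) hD h1.integrableOn
    have e2 : Aᶜ \ D = (A ∪ D)ᶜ := by
      rw [Set.compl_union, Set.diff_eq]
    have low : c * P.real (Aᶜ ∩ D) ≤ ∫ ω in Aᶜ ∩ D, Z (t (k+1)) ω ∂P :=
      setIntegral_ge_of_const_le_real (hA.compl.inter hD) (measure_ne_top _ _)
        (fun x hx => le_of_lt hx.2) h1.integrableOn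
    have meas : P.real (A ∪ D) = P.real A + P.real (Aᶜ ∩ D) := by
      rw [← measureReal_union (Set.disjoint_left.2 fun x hx hx' => hx'.1 hx)
        (hA.compl.inter hD)]
      congr 1
      ext x; by_cases hx : x ∈ A <;> simp [hx]
    rw [e, meas, ← e2]
    linarith

/-- Uniform bound for the probability of exceeding `1 + ε` along a grid ending at `T`. -/
lemma grid_bound (P : Measure Ω) [IsProbabilityMeasure P]
    (ℱ : Filtration ℝ m0) (T : ℝ) (hT : 0 < T) (Z : ℝ → Ω → ℝ)
    (hZp : IsProcess P ℱ T Z) (hZ : SupermartingaleOn P ℱ T Z)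
    (hZ0 : ∀ᵐ ω ∂P, Z 0 ω ≤ 1)
    (t : ℕ → ℝ) (ht : Monotone t) (ε δ : ℝ) (hε : 0 < ε) (hδ : 0 < δ) (hδ1 : δ < 1) (k : ℕ)
    (htT : ∀ j ≤ k, t j ∈ Set.Icc (0:ℝ) T) (ht0 : t 0 = 0) (htk : t k = T)
    (hB : P.real {ω | δ ≤ dist (Z T ω) 1} ≤ δ) :
    P.real (exceedSet Z t (1 + ε) k) ≤ 2 * δ / ε := by
  have h := discrete_maximal P ℱ T Z hZ t ht (1 + ε) k htT
  have hA := ℱ.le _ _ (measurableSet_exceedSet ℱ T Z hZ.1 t ht (1 + ε) k htT)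
  rw [ht0, htk] at h
  set A := exceedSet Z t (1 + ε) k
  set B := {ω | δ ≤ dist (Z T ω) 1} with hBdef
  have hTm : T ∈ Set.Icc (0:ℝ) T := ⟨hT.le, le_rfl⟩
  have h0m : (0:ℝ) ∈ Set.Icc (0:ℝ) T := ⟨le_rfl, hT.le⟩
  have hBm : MeasurableSet B := by
    have hmm : Measurable (Z T) := (hZ.1 T hTm).mono (ℱ.le T) le_rfl
    exact measurableSet_le measurable_const (hmm.dist measurable_const)
  have hE0 : ∫ ω, Z 0 ω ∂P ≤ 1 := by
    have := integral_mono_ae (hZ.2.1 0 h0m) (integrable_const (1:ℝ)) hZ0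
    simpa using this
  have hiT := hZ.2.1 T hTm
  have low : (1 - δ) * P.real (Aᶜ \ B) ≤ ∫ ω in Aᶜ, Z T ω ∂P := by
    calc (1 - δ) * P.real (Aᶜ \ B) ≤ ∫ ω in Aᶜ \ B, Z T ω ∂P := by
          refine setIntegral_ge_of_const_le_real (hA.compl.diff hBm) (measure_ne_top _ _)
            (fun x hx => ?_) hiT.integrableOn
          have hx2 : ¬ δ ≤ dist (Z T x) 1 := hx.2
          rw [Real.dist_eq, not_le] at hx2
          linarith [(abs_lt.1 hx2).1]
      _ ≤ _ := by
          refine setIntegral_mono_set hiT.integrableOn (ae_restrict_of_ae ?_)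
            (Set.diff_subset.eventuallyLE)
          filter_upwards [hZp.nonneg] with ω hω using hω T hTm
  have m1 : P.real (Aᶜ) ≤ P.real (Aᶜ \ B) + P.real B := by
    refine (measureReal_mono ?_).trans (measureReal_union_le _ _)
    intro x hx
    by_cases hxB : x ∈ B
    · exact Or.inr hxB
    · exact Or.inl ⟨hx, hxB⟩
  have m2 : P.real (Aᶜ) = 1 - P.real A := probReal_compl_eq_one_sub hA
  rw [le_div_iff₀ hε]
  have m3 : (1 - δ) * (1 - P.real A - δ) ≤ (1 - δ) * P.real (Aᶜ \ B) :=
    mul_le_mul_of_nonneg_left (by linarith) (by linarith)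
  have hp : 0 ≤ P.real A := measureReal_nonneg
  nlinarith [mul_nonneg hδ.le hp, sq_nonneg δ]

/-- Dyadic grid of `[0,T]`. -/
def dyGrid (T : ℝ) (m : ℕ) (k : ℕ) : ℝ := (k : ℝ) * T / 2 ^ m

lemma dyGrid_mono (T : ℝ) (hT : 0 < T) (m : ℕ) : Monotone (dyGrid T m) := by
  intro a b hab
  unfold dyGrid
  have : (a:ℝ) ≤ b := by exact_mod_cast hab
  gcongr

lemma dyGrid_zero (T : ℝ) (m : ℕ) : dyGrid T m 0 = 0 := by simp [dyGrid]

lemma dyGrid_last (T : ℝ) (m : ℕ) : dyGrid T m (2 ^ m) = T := by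
  simp [dyGrid]

lemma dyGrid_mem (T : ℝ) (hT : 0 < T) (m j : ℕ) (hj : j ≤ 2 ^ m) :
    dyGrid T m j ∈ Set.Icc (0:ℝ) T := by
  constructor
  · rw [← dyGrid_zero T m]; exact dyGrid_mono T hT m (Nat.zero_le j)
  · conv_rhs => rw [← dyGrid_last T m]
    exact dyGrid_mono T hT m hj

lemma exceed_mono (T : ℝ) (Z : ℝ → Ω → ℝ) (c : ℝ) :
    Monotone (fun m : ℕ => exceedSet Z (dyGrid T m) c (2 ^ m)) := by
  refine monotone_nat_of_le_succ fun m ω hω => ?_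
  rw [mem_exceedSet] at hω ⊢
  obtain ⟨j, hj, h⟩ := hω
  refine ⟨2 * j, by rw [pow_succ]; omega, ?_⟩
  have : dyGrid T (m+1) (2 * j) = dyGrid T m j := by
    unfold dyGrid
    push_cast
    rw [pow_succ]
    field_simp
  rwa [this]

lemma exceed_of_cadlag (T : ℝ) (hT : 0 < T) (Z : ℝ → Ω → ℝ) (c : ℝ) (ω : Ω)
    (hc : CadlagOn T (fun t => Z t ω)) (h : ∃ t ∈ Set.Icc (0:ℝ) T, c < Z t ω) :
    ∃ m, ω ∈ exceedSet Z (dyGrid T m) c (2 ^ m) := by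
  obtain ⟨t, ht, hlt⟩ := h
  rcases ht.2.lt_or_eq with htT | rfl
  · set s : ℕ → ℝ := fun m => dyGrid T m (⌊t * 2 ^ m / T⌋₊ + 1) with hs
    have hlo : ∀ m, t ≤ s m := by
      intro m
      have := (Nat.lt_floor_add_one (t * 2 ^ m / T)).le
      simp only [hs, dyGrid]
      rw [le_div_iff₀ (by positivity)]
      rw [div_le_iff₀ hT] at this
      push_cast
      exact this
    have hhi : ∀ m, s m ≤ t + T * (1/2) ^ m := by
      intro m
      have h0 := ht.1
      have := Nat.floor_le (a := t * 2 ^ m / T) (by positivity)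
      rw [le_div_iff₀ hT] at this
      simp only [hs, dyGrid]
      rw [div_le_iff₀ (by positivity), add_mul, mul_assoc T, ← mul_pow]
      push_cast
      norm_num
      linarith
    have hlim : Tendsto s atTop (𝓝 t) := by
      refine tendsto_of_tendsto_of_tendsto_of_le_of_le tendsto_const_nhds ?_ hlo hhi
      have := ((tendsto_pow_atTop_nhds_zero_of_lt_one (r := (1/2:ℝ)) (by norm_num)
        (by norm_num)).const_mul T).const_add t
      simpa using this
    have hlim' : Tendsto s atTop (𝓝[Set.Ici t] t) :=
      tendsto_nhdsWithin_iff.2 ⟨hlim, Eventually.of_forall hlo⟩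
    have hcomp := (hc.1 t ⟨ht.1, htT⟩).tendsto.comp hlim'
    obtain ⟨m, hm⟩ := (hcomp.eventually (lt_mem_nhds hlt)).exists
    refine ⟨m, (mem_exceedSet _ _ _ _ _).2 ⟨⌊t * 2 ^ m / T⌋₊ + 1, ?_, hm⟩⟩
    have h0 := ht.1
    have : ⌊t * 2 ^ m / T⌋₊ < 2 ^ m := by
      rw [Nat.floor_lt (by positivity), div_lt_iff₀ hT]
      push_cast
      rw [mul_comm]
      gcongr
    omega
  · exact ⟨0, (mem_exceedSet _ _ _ _ _).2 ⟨2 ^ 0, le_rfl, by rwa [dyGrid_last]⟩⟩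

theorem supermartingale_sup_convergence
    {Ω : Type*} {m0 : MeasurableSpace Ω} (P : Measure Ω) [IsProbabilityMeasure P]
    (ℱ : Filtration ℝ m0) (T : ℝ) (hT : 0 < T)
    (hF_rightCont : ∀ t : ℝ, ℱ t = ⨅ s ∈ Set.Ioi t, ℱ s)
    (hF_complete : ∀ (t : ℝ) (A : Set Ω), P A = 0 → MeasurableSet[ℱ t] A)
    (Z : ℕ → ℝ → Ω → ℝ)
    (hZ_proc : ∀ n, IsProcess P ℱ T (Z n))
    (hZ_sup : ∀ n, SupermartingaleOn P ℱ T (Z n))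
    (hZ0 : ∀ n, ∀ᵐ ω ∂P, Z n 0 ω ≤ 1)
    (hZT : TendstoInMeasure P (fun n => Z n T) Filter.atTop (fun _ => (1:ℝ)))
    :
    ∀ ε : ℝ, 0 < ε →
      Filter.Tendsto (fun n => P {ω | ∃ t ∈ Set.Icc (0:ℝ) T, 1 + ε < Z n t ω})
        Filter.atTop (nhds 0) := by
  intro ε hε
  rw [ENNReal.tendsto_nhds_zero]
  intro η hη
  rcases eq_or_ne η ⊤ with rfl | hηt
  · simp
  have hr : 0 < η.toReal := ENNReal.toReal_pos hη.ne' hηt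
  set δ : ℝ := min (1/2) (η.toReal * ε / 2) with hδdef
  have hδ : 0 < δ := lt_min (by norm_num) (by positivity)
  have hδ1 : δ < 1 := (min_le_left _ _).trans_lt (by norm_num)
  have hδ2 : 2 * δ / ε ≤ η.toReal := by
    rw [div_le_iff₀ hε]
    linarith [min_le_right (1/2 : ℝ) (η.toReal * ε / 2)]
  have hconv := tendstoInMeasure_iff_measureReal_dist.1 hZT δ hδ
  filter_upwards [hconv.eventually (gt_mem_nhds hδ)] with n hn
  have hsub : P {ω | ∃ t ∈ Set.Icc (0:ℝ) T, 1 + ε < Z n t ω}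
      ≤ P (⋃ m : ℕ, exceedSet (Z n) (dyGrid T m) (1 + ε) (2 ^ m)) := by
    refine measure_mono_ae ?_
    filter_upwards [(hZ_proc n).cadlag] with ω hω h
    exact Set.mem_iUnion.2 (exceed_of_cadlag T hT (Z n) (1 + ε) ω hω h)
  refine hsub.trans ?_
  rw [(exceed_mono T (Z n) (1 + ε)).measure_iUnion]
  refine iSup_le fun m => ?_
  have hb := grid_bound P ℱ T hT (Z n) (hZ_proc n) (hZ_sup n) (hZ0 n) (dyGrid T m)
    (dyGrid_mono T hT m) ε δ hε hδ hδ1 (2 ^ m) (dyGrid_mem T hT m) (dyGrid_zero T m)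
    (dyGrid_last T m) hn.le
  rw [← ENNReal.ofReal_toReal hηt, ← ofReal_measureReal]
  exact ENNReal.ofReal_le_ofReal (hb.trans hδ2)

end WPS
end
end

section
/- Suppose (Z^n)_{n∈ℕ} is a sequence of nonnegative càdlàg P-supermartingales indexed by [0,T] such that Z^n_0 ≤ 1 almost surely for every n, and Z^n_T → 1 in P-probability as n → ∞. Then for every ε ∈ (0,∞), lim_{n→∞} P[inf_{t∈[0,T]} Z^n_t < 1 − ε] = 0. -/
open MeasureTheory Filter Set Topology
open scoped ENNReal

noncomputable section

namespace WPS

variable {Ω : Type*}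

variable {m0 : MeasurableSpace Ω}

lemma finite_bound {Ω : Type*} {m0 : MeasurableSpace Ω} (P : Measure Ω) [IsProbabilityMeasure P]
    (ℱ : Filtration ℝ m0) (T : ℝ) (hT : 0 < T) (Z : ℝ → Ω → ℝ)
    (hZ : SupermartingaleOn P ℱ T Z) (c : ℝ) (S : Finset ℝ) :
    (∀ t ∈ S, t ∈ Set.Icc (0:ℝ) T) →
    ∫ ω in (⋃ t ∈ S, {ω | Z t ω < c}), Z T ω ∂P ≤ c * P.real (⋃ t ∈ S, {ω | Z t ω < c}) := by
  obtain ⟨hm, hi, hs⟩ := hZ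
  have hTT : T ∈ Set.Icc (0:ℝ) T := ⟨hT.le, le_rfl⟩
  induction S using Finset.induction_on_max with
  | empty => simp
  | insert t S hlt ih =>
    intro hS
    have htI : t ∈ Set.Icc (0:ℝ) T := hS t (by simp)
    have hSI : ∀ s ∈ S, s ∈ Set.Icc (0:ℝ) T := fun s h => hS s (by simp [h])
    have ih' := ih hSI
    set A : Set Ω := ⋃ s ∈ S, {ω | Z s ω < c} with hA
    have hAm : MeasurableSet[ℱ t] A := by
      refine Finset.measurableSet_biUnion S fun s hs' => ?_
      refine ℱ.mono (hlt s hs').le _ ?_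
      exact @measurableSet_lt _ _ _ _ _ (ℱ s) _ _ _ _ _ (hm s (hSI s hs')) measurable_const
    have hBm : MeasurableSet[ℱ t] {ω | Z t ω < c} :=
      @measurableSet_lt _ _ _ _ _ (ℱ t) _ _ _ _ _ (hm t htI) measurable_const
    set D : Set Ω := {ω | Z t ω < c} \ A with hD
    have hDm : MeasurableSet[ℱ t] D := hBm.diff hAm
    have hDm0 : MeasurableSet D := ℱ.le t _ hDm
    have hU : (⋃ s ∈ insert t S, {ω | Z s ω < c}) = A ∪ D := by
      rw [Finset.set_biUnion_insert, hD, Set.union_diff_self, Set.union_comm]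
    have hdisj : Disjoint A D := Set.disjoint_sdiff_right
    rw [hU, setIntegral_union hdisj hDm0 (hi T hTT).integrableOn (hi T hTT).integrableOn,
      measureReal_union hdisj hDm0 (measure_ne_top P _) (measure_ne_top P _)]
    have h1 : ∫ ω in D, Z T ω ∂P ≤ c * P.real D := by
      calc ∫ ω in D, Z T ω ∂P = ∫ ω in D, (P[Z T | ℱ t]) ω ∂P :=
            (setIntegral_condExp (ℱ.le t) (hi T hTT) hDm).symm
        _ ≤ ∫ ω in D, Z t ω ∂P :=
            setIntegral_mono_ae integrable_condExp.integrableOn (hi t htI).integrableOn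
              (hs t T htI.1 htI.2 le_rfl)
        _ ≤ ∫ ω in D, c ∂P :=
            setIntegral_mono_on (hi t htI).integrableOn (integrable_const c).integrableOn hDm0
              (fun ω hω => le_of_lt hω.1)
        _ = c * P.real D := by simp [mul_comm]
    linarith

lemma finite_bound' {Ω : Type*} {m0 : MeasurableSpace Ω} (P : Measure Ω) [IsProbabilityMeasure P]
    (ℱ : Filtration ℝ m0) (T : ℝ) (hT : 0 < T) (Z : ℝ → Ω → ℝ)
    (hZ : SupermartingaleOn P ℱ T Z) (hnn : ∀ᵐ ω ∂P, ∀ t ∈ Set.Icc (0:ℝ) T, 0 ≤ Z t ω)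
    (ε δ : ℝ) (hδ : 0 < δ) (S : Finset ℝ)
    (hS : ∀ t ∈ S, t ∈ Set.Icc (0:ℝ) T) :
    ε * P.real (⋃ t ∈ S, {ω | Z t ω < 1 - ε}) ≤ δ + P.real {ω | δ ≤ |Z T ω - 1|} := by
  have h := finite_bound P ℱ T hT Z hZ (1 - ε) S hS
  obtain ⟨hm, hi, hs⟩ := hZ
  have hTT : T ∈ Set.Icc (0:ℝ) T := ⟨hT.le, le_rfl⟩
  set A : Set Ω := ⋃ t ∈ S, {ω | Z t ω < 1 - ε} with hA
  set B : Set Ω := {ω | δ ≤ |Z T ω - 1|} with hB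
  have hZTm : Measurable (Z T) := (hm T hTT).mono (ℱ.le T) le_rfl
  have hBm : MeasurableSet B := measurableSet_le measurable_const (by fun_prop)
  have hint : Integrable (fun ω => δ + B.indicator (fun _ => (1:ℝ)) ω) P :=
    (integrable_const δ).add ((integrable_const (1:ℝ)).indicator hBm)
  have h1 : ∫ ω in A, (1 - Z T ω) ∂P ≤ ∫ ω in A, (δ + B.indicator (fun _ => (1:ℝ)) ω) ∂P := by
    refine setIntegral_mono_ae ((integrable_const 1).sub (hi T hTT)).integrableOn
      hint.integrableOn ?_
    filter_upwards [hnn] with ω hω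
    have h0 := hω T hTT
    by_cases hb : ω ∈ B
    · simp only [Set.indicator_of_mem hb]; linarith
    · simp only [Set.indicator_of_notMem hb]
      have : |Z T ω - 1| < δ := not_le.mp hb
      have := (abs_lt.mp this).1
      linarith
  have h2 : ∫ ω in A, (δ + B.indicator (fun _ => (1:ℝ)) ω) ∂P
      ≤ ∫ ω, (δ + B.indicator (fun _ => (1:ℝ)) ω) ∂P := by
    refine setIntegral_le_integral hint (Eventually.of_forall fun ω => ?_)
    have : (0:ℝ) ≤ B.indicator (fun _ => (1:ℝ)) ω := Set.indicator_nonneg (fun _ _ => zero_le_one) _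
    simp only [Pi.zero_apply]
    linarith
  have h3 : ∫ ω, (δ + B.indicator (fun _ => (1:ℝ)) ω) ∂P = δ + P.real B := by
    rw [integral_add (integrable_const δ) ((integrable_const (1:ℝ)).indicator hBm),
      integral_indicator_const _ hBm]
    simp
  have h4 : ∫ ω in A, (1 - Z T ω) ∂P = P.real A - ∫ ω in A, Z T ω ∂P := by
    rw [integral_sub (integrable_const 1).integrableOn (hi T hTT).integrableOn]
    simp
  linarith

lemma full_bound {Ω : Type*} {m0 : MeasurableSpace Ω} (P : Measure Ω) [IsProbabilityMeasure P]
    (ℱ : Filtration ℝ m0) (T : ℝ) (hT : 0 < T) (Z : ℝ → Ω → ℝ)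
    (hZ : SupermartingaleOn P ℱ T Z) (hp : IsProcess P ℱ T Z)
    (ε δ : ℝ) (hε : 0 < ε) (hδ : 0 < δ) :
    P {ω | ∃ t ∈ Set.Icc (0:ℝ) T, Z t ω < 1 - ε}
      ≤ ENNReal.ofReal ((δ + P.real {ω | δ ≤ |Z T ω - 1|}) / ε) := by
  classical
  set K := (δ + P.real {ω | δ ≤ |Z T ω - 1|}) / ε with hK
  let g : ℚ → ℝ := fun q => min T (max 0 (q:ℝ))
  have hg : ∀ q, g q ∈ Set.Icc (0:ℝ) T := fun q =>
    ⟨le_min hT.le (le_max_left _ _), min_le_left _ _⟩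
  have hcount : P (⋃ S : Finset ℚ, ⋃ t ∈ S.image g, {ω | Z t ω < 1 - ε}) ≤ ENNReal.ofReal K := by
    rw [Directed.measure_iUnion]
    · refine iSup_le fun S => ?_
      rw [← ofReal_measureReal (measure_ne_top P _)]
      refine ENNReal.ofReal_le_ofReal ?_
      rw [hK, le_div_iff₀ hε, mul_comm]
      refine finite_bound' P ℱ T hT Z hZ hp.nonneg ε δ hδ _ ?_
      intro t ht
      obtain ⟨q, -, rfl⟩ := Finset.mem_image.mp ht
      exact hg q
    · refine Monotone.directed_le fun S S' h => ?_
      exact Set.biUnion_subset_biUnion_left (fun x hx => Finset.image_subset_image h hx)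
  refine le_trans (measure_mono_ae ?_) hcount
  filter_upwards [hp.cadlag] with ω hω
  rintro ⟨t, ht, hlt⟩
  have key : ∃ q : ℚ, Z (g q) ω < 1 - ε := by
    rcases eq_or_lt_of_le ht.2 with rfl | htT
    · obtain ⟨q, hq⟩ := exists_rat_gt t
      refine ⟨q, ?_⟩
      have : g q = t := min_eq_left (hq.le.trans (le_max_right _ _))
      rwa [this]
    · have hc := hω.1 t ⟨ht.1, htT⟩
      have he : ∀ᶠ s in 𝓝[≥] t, Z s ω < 1 - ε := hc.eventually (gt_mem_nhds hlt)
      obtain ⟨u, hu, hsub⟩ := (mem_nhdsGE_iff_exists_Ico_subset' htT).mp he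
      obtain ⟨q, hq1, hq2⟩ := exists_rat_btwn (lt_min hu htT)
      refine ⟨q, ?_⟩
      have : g q = q := by
        have h0 : (0:ℝ) ≤ q := ht.1.trans hq1.le
        have h1 : (q:ℝ) ≤ T := hq2.le.trans (min_le_right _ _)
        simp only [g, max_eq_right h0, min_eq_right h1]
      rw [this]
      exact hsub ⟨hq1.le, hq2.trans_le (min_le_left _ _)⟩
  obtain ⟨q, hq⟩ := key
  refine Set.mem_iUnion.mpr ⟨{q}, ?_⟩
  simpa using hq

theorem supermartingale_inf_convergence
    {Ω : Type*} {m0 : MeasurableSpace Ω} (P : Measure Ω) [IsProbabilityMeasure P]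
    (ℱ : Filtration ℝ m0) (T : ℝ) (hT : 0 < T)
    (hF_rightCont : ∀ t : ℝ, ℱ t = ⨅ s ∈ Set.Ioi t, ℱ s)
    (hF_complete : ∀ (t : ℝ) (A : Set Ω), P A = 0 → MeasurableSet[ℱ t] A)
    (Z : ℕ → ℝ → Ω → ℝ)
    (hZ_proc : ∀ n, IsProcess P ℱ T (Z n))
    (hZ_sup : ∀ n, SupermartingaleOn P ℱ T (Z n))
    (hZ0 : ∀ n, ∀ᵐ ω ∂P, Z n 0 ω ≤ 1)
    (hZT : TendstoInMeasure P (fun n => Z n T) Filter.atTop (fun _ => (1:ℝ)))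
    :
    ∀ ε : ℝ, 0 < ε →
      Filter.Tendsto (fun n => P {ω | ∃ t ∈ Set.Icc (0:ℝ) T, Z n t ω < 1 - ε})
        Filter.atTop (nhds 0) := by
  intro ε hε
  rw [ENNReal.tendsto_nhds_zero]
  intro η hη
  obtain ⟨r, hr0, hr⟩ : ∃ r : ℝ, 0 < r ∧ ENNReal.ofReal r ≤ η := by
    by_cases h : η = ⊤
    · exact ⟨1, one_pos, by simp [h]⟩
    · exact ⟨η.toReal, ENNReal.toReal_pos hη.ne' h, ENNReal.ofReal_toReal_le⟩
  have hδ : 0 < r * ε / 2 := by positivity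
  have hev := (tendstoInMeasure_iff_measureReal_dist.mp hZT (r * ε / 2) hδ).eventually
    (gt_mem_nhds hδ)
  filter_upwards [hev] with n hn
  refine (full_bound P ℱ T hT (Z n) (hZ_sup n) (hZ_proc n) ε (r * ε / 2) hε hδ).trans
    (le_trans (ENNReal.ofReal_le_ofReal ?_) hr)
  rw [div_le_iff₀ hε]
  simp only [Real.dist_eq] at hn
  linarith

end WPS
end
end
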